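/- Let d ≥ 1 be an integer and let β ∈ (0, d). There exists a constant C > 0, depending only on d and β, such that for all t₁, t₂ > 0 and all R > 0, ∫_{Q_R × Q_R} ∫_{ℝ^d} ∫_{ℝ^d} p_{t₁}(x₁ − y) p_{t₂}(x₂ − z) ‖y − z‖^{−β} dy dz dx₁ dx₂ ≤ C R^{2d−β}. -/

import Mathlib

open MeasureTheory

noncomputable def heatKernel (d : ℕ) (t : ℝ) (x : EuclideanSpace ℝ (Fin d)) : ℝ :=
  (2 * Real.pi * t) ^ (-(d : ℝ) / 2) * Real.exp (-‖x‖ ^ 2 / (2 * t))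

def box (d : ℕ) (R : ℝ) : Set (EuclideanSpace ℝ (Fin d)) :=
  {x | ∀ i, |x i| ≤ R}

/-!
The substitutions `y ↦ x₁ - y`, `z ↦ x₂ - z` turn the kernel into `‖(x₁ - y) - (x₂ - z)‖ ^ (-β)`
and free the two heat kernels of `x₁` and `x₂`. By Tonelli the boxes can then be integrated first:
for every shift `a`, the integral of `‖x - a‖ ^ (-β)` over `Q_R` is at most a constant times
`R ^ (d - β)`, by scaling to `R = 1` and bounding the kernel by `1` off the unit ball around `a`.
The other box contributes its volume, and each heat kernel only its mass `1`, whatever its time.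
-/

open Module Metric Set
open scoped ENNReal Pointwise

section Mollification

variable {G : Type*} [AddCommGroup G] [MeasurableSpace G] [MeasurableAdd₂ G] [MeasurableNeg G]
  {μ : Measure G} [SFinite μ]

lemma lintegral_lintegral_sub_eq_lintegral_withDensity [μ.IsAddLeftInvariant] [μ.IsNegInvariant]
    {f g k : G → ℝ≥0∞} (hf : AEMeasurable f μ) (hg : AEMeasurable g μ) (hk : Measurable k)
    (a b : G) :
    ∫⁻ y, ∫⁻ z, f (a - y) * g (b - z) * k (y - z) ∂μ ∂μ =
      ∫⁻ q, k (a - q.1 - (b - q.2)) ∂(μ.withDensity f).prod (μ.withDensity g) := by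
  have inner (y : G) : ∫⁻ z, f (a - y) * g (b - z) * k (y - z) ∂μ =
      f (a - y) * ∫⁻ z, k (y - (b - z)) ∂μ.withDensity g := by
    rw [lintegral_withDensity_eq_lintegral_mul₀ hg (by fun_prop),
      ← lintegral_const_mul'' _ (by simp only [Pi.mul_def]; fun_prop),
      ← lintegral_sub_left_eq_self _ b]
    simp only [sub_sub_cancel, mul_assoc, Pi.mul_apply]
  have outer_measurable : Measurable fun y ↦ ∫⁻ z, k (a - y - (b - z)) ∂μ.withDensity g :=
    Measurable.lintegral_prod_right (by fun_prop)
  simp only [inner]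
  rw [lintegral_prod _ (by fun_prop),
    lintegral_withDensity_eq_lintegral_mul₀ hf outer_measurable.aemeasurable,
    ← lintegral_sub_left_eq_self _ a]
  simp only [sub_sub_cancel, Pi.mul_apply]

lemma setLIntegral_prod_sub_le {k : G → ℝ≥0∞} (hk : Measurable k) {s : Set G} {L : ℝ≥0∞}
    (hL : ∀ a, ∫⁻ x in s, k (x - a) ∂μ ≤ L) (t : Set G) (a b : G) :
    ∫⁻ p in s ×ˢ t, k (p.1 - a - (p.2 - b)) ∂μ.prod μ ≤ L * μ t := by
  rw [setLIntegral_prod_symm _ (by fun_prop), ← setLIntegral_const]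
  refine lintegral_mono fun w ↦ ?_
  simpa only [sub_sub] using hL (a + (w - b))

theorem setLIntegral_prod_lintegral_mollified_le [μ.IsAddLeftInvariant] [μ.IsNegInvariant]
    {f g k : G → ℝ≥0∞} (hf : AEMeasurable f μ) (hg : AEMeasurable g μ) (hk : Measurable k)
    {s : Set G} {L : ℝ≥0∞} (hL : ∀ a, ∫⁻ x in s, k (x - a) ∂μ ≤ L) (t : Set G) :
    ∫⁻ p in s ×ˢ t, ∫⁻ y, ∫⁻ z, f (p.1 - y) * g (p.2 - z) * k (y - z) ∂μ ∂μ ∂μ.prod μ ≤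
      L * μ t * ((∫⁻ x, f x ∂μ) * ∫⁻ x, g x ∂μ) := by
  set ν := (μ.withDensity f).prod (μ.withDensity g) with hν
  calc ∫⁻ p in s ×ˢ t, ∫⁻ y, ∫⁻ z, f (p.1 - y) * g (p.2 - z) * k (y - z) ∂μ ∂μ ∂μ.prod μ
      = ∫⁻ p in s ×ˢ t, ∫⁻ q, k (p.1 - q.1 - (p.2 - q.2)) ∂ν ∂μ.prod μ := by
        simp only [lintegral_lintegral_sub_eq_lintegral_withDensity hf hg hk, hν]
    _ = ∫⁻ q, ∫⁻ p in s ×ˢ t, k (p.1 - q.1 - (p.2 - q.2)) ∂μ.prod μ ∂ν :=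
        lintegral_lintegral_swap (by fun_prop)
    _ ≤ ∫⁻ _, L * μ t ∂ν := lintegral_mono fun q ↦ setLIntegral_prod_sub_le hk hL t q.1 q.2
    _ = L * μ t * ((∫⁻ x, f x ∂μ) * ∫⁻ x, g x ∂μ) := by
        rw [lintegral_const, hν, ← univ_prod_univ, Measure.prod_prod,
          withDensity_apply _ .univ, withDensity_apply _ .univ, setLIntegral_univ,
          setLIntegral_univ]

end Mollification

lemma enorm_integral_integral_integral_le {α β γ F : Type*} [MeasurableSpace α]
    [MeasurableSpace β] [MeasurableSpace γ] {μ : Measure α} {ν : Measure β} {ρ : Measure γ}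
    [NormedAddCommGroup F] [NormedSpace ℝ F] (f : α → β → γ → F) :
    ‖∫ x, ∫ y, ∫ z, f x y z ∂ρ ∂ν ∂μ‖ₑ ≤ ∫⁻ x, ∫⁻ y, ∫⁻ z, ‖f x y z‖ₑ ∂ρ ∂ν ∂μ :=
  (enorm_integral_le_lintegral_enorm _).trans <| lintegral_mono fun _ ↦
    (enorm_integral_le_lintegral_enorm _).trans <| lintegral_mono fun _ ↦
      enorm_integral_le_lintegral_enorm _

section RieszKernel

variable {E : Type*} [NormedAddCommGroup E]

/-- The Riesz kernel `x ↦ ‖x‖ ^ (-β)`, with values in `ℝ≥0∞` so that it can be integrated without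
integrability side conditions. For `β ≠ 0` its value at the singularity `x = 0` is the junk
value `0`. -/
noncomputable def rieszKernel (β : ℝ) (x : E) : ℝ≥0∞ := ENNReal.ofReal (‖x‖ ^ (-β))

lemma enorm_norm_rpow_neg (β : ℝ) (x : E) : ‖‖x‖ ^ (-β)‖ₑ = rieszKernel β x :=
  Real.enorm_of_nonneg (Real.rpow_nonneg (norm_nonneg x) _)

lemma rieszKernel_le_one {β : ℝ} (hβ : 0 ≤ β) {x : E} (hx : 1 ≤ ‖x‖) : rieszKernel β x ≤ 1 :=
  ENNReal.ofReal_le_one.2 (Real.rpow_le_one_of_one_le_of_nonpos hx (neg_nonpos.2 hβ))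

lemma rieszKernel_smul [NormedSpace ℝ E] (β : ℝ) {R : ℝ} (hR : 0 ≤ R) (x : E) :
    rieszKernel β (R • x) = ENNReal.ofReal (R ^ (-β)) * rieszKernel β x := by
  rw [rieszKernel, rieszKernel, norm_smul, Real.norm_of_nonneg hR,
    Real.mul_rpow hR (norm_nonneg x), ENNReal.ofReal_mul (by positivity)]

variable [MeasurableSpace E] [BorelSpace E]

@[fun_prop]
lemma measurable_rieszKernel (β : ℝ) : Measurable (rieszKernel β : E → ℝ≥0∞) := by
  unfold rieszKernel
  fun_prop

lemma setLIntegral_rieszKernel_sub_le (μ : Measure E) [μ.IsAddRightInvariant] {β : ℝ}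
    (hβ : 0 ≤ β) (s : Set E) (a : E) :
    ∫⁻ x in s, rieszKernel β (x - a) ∂μ ≤ ∫⁻ x in ball 0 1, rieszKernel β x ∂μ + μ s := by
  have pointwise (x : E) : rieszKernel β x ≤ (ball 0 1).indicator (rieszKernel β) x + 1 := by
    by_cases hx : x ∈ ball (0 : E) 1
    · rw [indicator_of_mem hx]
      exact le_self_add
    · exact le_add_left (rieszKernel_le_one hβ (by simpa using hx))
  calc ∫⁻ x in s, rieszKernel β (x - a) ∂μ
      ≤ ∫⁻ x in s, ((ball 0 1).indicator (rieszKernel β) (x - a) + 1) ∂μ :=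
        lintegral_mono fun x ↦ pointwise (x - a)
    _ = ∫⁻ x in s, (ball 0 1).indicator (rieszKernel β) (x - a) ∂μ + μ s := by
        rw [lintegral_add_right _ measurable_const, setLIntegral_one]
    _ ≤ ∫⁻ x, (ball 0 1).indicator (rieszKernel β) (x - a) ∂μ + μ s := by
        gcongr
        exact Measure.restrict_le_self
    _ = ∫⁻ x in ball 0 1, rieszKernel β x ∂μ + μ s := by
        rw [lintegral_sub_right_eq_self _ a, lintegral_indicator measurableSet_ball]

variable [NormedSpace ℝ E] [FiniteDimensional ℝ E] (μ : Measure E) [μ.IsAddHaarMeasure]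

lemma setLIntegral_ball_rieszKernel_lt_top {β : ℝ} (hd : 1 ≤ finrank ℝ E)
    (hβ : β < finrank ℝ E) (r : ℝ) : ∫⁻ x in ball 0 r, rieszKernel β x ∂μ < ∞ := by
  have integrable : IntegrableOn (fun x : E ↦ ‖x‖ ^ (-β)) (ball 0 r) μ := by
    refine integrableOn_ball_of_norm_le_rpow (C := 1) hd hβ (.of_forall fun x ↦ ?_)
      (by fun_prop : Measurable _).aestronglyMeasurable
    rw [one_mul, Real.norm_of_nonneg (by positivity)]
  exact integrable.lintegral_lt_top

lemma setLIntegral_smul_set {R : ℝ} (hR : 0 < R) (f : E → ℝ≥0∞) (s : Set E) :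
    ∫⁻ x in R • s, f x ∂μ = ENNReal.ofReal (R ^ finrank ℝ E) * ∫⁻ x in s, f (R • x) ∂μ := by
  have emb : MeasurableEmbedding (R • · : E → E) := measurableEmbedding_const_smul₀ hR.ne'
  have preimage_smul : (R • · : E → E) ⁻¹' (R • s) = s := preimage_image_eq s emb.injective
  have pull : ∫⁻ x in s, f (R • x) ∂μ =
      ENNReal.ofReal (R ^ finrank ℝ E)⁻¹ * ∫⁻ x in R • s, f x ∂μ := by
    rw [← emb.lintegral_map, ← preimage_smul, ← emb.restrict_map, preimage_smul,
      Measure.map_addHaar_smul μ hR.ne', Measure.restrict_smul, lintegral_smul_measure,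
      abs_of_pos (by positivity), smul_eq_mul]
  rw [pull, ← mul_assoc, ← ENNReal.ofReal_mul (by positivity), mul_inv_cancel₀ (by positivity),
    ENNReal.ofReal_one, one_mul]

lemma setLIntegral_smul_set_rieszKernel_sub (β : ℝ) {R : ℝ} (hR : 0 < R) (s : Set E) (a : E) :
    ∫⁻ x in R • s, rieszKernel β (x - a) ∂μ =
      ENNReal.ofReal (R ^ (finrank ℝ E - β)) * ∫⁻ x in s, rieszKernel β (x - R⁻¹ • a) ∂μ := by
  have homogeneous (x : E) : rieszKernel β (R • x - a) =
      ENNReal.ofReal (R ^ (-β)) * rieszKernel β (x - R⁻¹ • a) := by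
    rw [← rieszKernel_smul β hR.le, smul_sub, smul_inv_smul₀ hR.ne']
  simp only [setLIntegral_smul_set μ hR, homogeneous]
  rw [lintegral_const_mul _ (by fun_prop), ← mul_assoc, ← ENNReal.ofReal_mul (by positivity),
    ← Real.rpow_natCast, ← Real.rpow_add hR, sub_eq_add_neg]

theorem setLIntegral_smul_set_rieszKernel_sub_le {β : ℝ} (hβ : 0 ≤ β) {R : ℝ} (hR : 0 < R)
    (s : Set E) (a : E) :
    ∫⁻ x in R • s, rieszKernel β (x - a) ∂μ ≤
      ENNReal.ofReal (R ^ (finrank ℝ E - β)) * (∫⁻ x in ball 0 1, rieszKernel β x ∂μ + μ s) := by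
  rw [setLIntegral_smul_set_rieszKernel_sub μ β hR]
  gcongr
  exact setLIntegral_rieszKernel_sub_le μ hβ s _

theorem setLIntegral_smul_set_prod_mollified_rieszKernel_le {β : ℝ} (hβ : 0 ≤ β) {R : ℝ}
    (hR : 0 < R) (s t : Set E) {f g : E → ℝ≥0∞} (hf : AEMeasurable f μ) (hg : AEMeasurable g μ) :
    ∫⁻ p in (R • s) ×ˢ (R • t),
        ∫⁻ y, ∫⁻ z, f (p.1 - y) * g (p.2 - z) * rieszKernel β (y - z) ∂μ ∂μ ∂μ.prod μ ≤
      (∫⁻ x in ball 0 1, rieszKernel β x ∂μ + μ s) * μ t *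
        ENNReal.ofReal (R ^ (2 * (finrank ℝ E : ℝ) - β)) *
        ((∫⁻ x, f x ∂μ) * ∫⁻ x, g x ∂μ) := by
  have exponents : R ^ (2 * (finrank ℝ E : ℝ) - β) =
      R ^ (finrank ℝ E - β) * R ^ finrank ℝ E := by
    rw [← Real.rpow_natCast, ← Real.rpow_add hR]
    ring_nf
  refine (setLIntegral_prod_lintegral_mollified_le hf hg (measurable_rieszKernel β)
    (setLIntegral_smul_set_rieszKernel_sub_le μ hβ hR s) (R • t)).trans_eq ?_
  rw [Measure.addHaar_smul_of_nonneg μ hR.le, exponents, ENNReal.ofReal_mul (by positivity)]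
  ring

lemma enorm_setIntegral_smul_set_prod_mollified_le {β : ℝ} (hβ : 0 ≤ β) {R : ℝ} (hR : 0 < R)
    (s t : Set E) {f g : E → ℝ} (hf : AEMeasurable f μ) (hg : AEMeasurable g μ) :
    ‖∫ p in (R • s) ×ˢ (R • t),
        ∫ y, ∫ z, f (p.1 - y) * g (p.2 - z) * ‖y - z‖ ^ (-β) ∂μ ∂μ ∂μ.prod μ‖ₑ ≤
      (∫⁻ x in ball 0 1, rieszKernel β x ∂μ + μ s) * μ t *
        ENNReal.ofReal (R ^ (2 * (finrank ℝ E : ℝ) - β)) *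
        ((∫⁻ x, ‖f x‖ₑ ∂μ) * ∫⁻ x, ‖g x‖ₑ ∂μ) := by
  refine (enorm_integral_integral_integral_le _).trans ?_
  simp only [enorm_mul, enorm_norm_rpow_neg]
  exact setLIntegral_smul_set_prod_mollified_rieszKernel_le μ hβ hR s t hf.enorm hg.enorm

theorem stmt_5_general {β : ℝ} (hβ0 : 0 ≤ β) (hβd : β < finrank ℝ E) {s t : Set E}
    (hs : μ s ≠ ∞) (ht : μ t ≠ ∞) :
    ∃ C : ℝ, 0 < C ∧ ∀ f g : E → ℝ, Integrable f μ → Integrable g μ → ∀ R : ℝ, 0 < R →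
      (∫ p in (R • s) ×ˢ (R • t),
          ∫ y, ∫ z, f (p.1 - y) * g (p.2 - z) * ‖y - z‖ ^ (-β) ∂μ ∂μ ∂μ.prod μ) ≤
        C * R ^ (2 * (finrank ℝ E : ℝ) - β) * ((∫ x, ‖f x‖ ∂μ) * ∫ x, ‖g x‖ ∂μ) := by
  set M := (∫⁻ x in ball 0 1, rieszKernel β x ∂μ + μ s) * μ t with hM
  have hd : 1 ≤ finrank ℝ E := Nat.cast_pos.1 (hβ0.trans_lt hβd)
  have M_ne_top : M ≠ ∞ := by
    finiteness [(setLIntegral_ball_rieszKernel_lt_top μ hd hβd 1).ne]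
  refine ⟨M.toReal + 1, by positivity, fun f g hf hg R hR ↦ ?_⟩
  have enorm_le := enorm_setIntegral_smul_set_prod_mollified_le μ hβ0 hR s t
    hf.aemeasurable hg.aemeasurable
  rw [← hM] at enorm_le
  have norm_le := ENNReal.toReal_mono (by finiteness [hf.2, hg.2]) enorm_le
  simp only [toReal_enorm, ENNReal.toReal_mul, ENNReal.toReal_ofReal (Real.rpow_nonneg hR.le _),
    ← integral_norm_eq_lintegral_enorm hf.1, ← integral_norm_eq_lintegral_enorm hg.1] at norm_le
  refine (Real.le_norm_self _).trans (norm_le.trans ?_)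
  gcongr
  exact le_add_of_nonneg_right zero_le_one

end RieszKernel

section HeatKernel

variable {d : ℕ} {t : ℝ}

lemma heatKernel_nonneg (ht : 0 ≤ t) (x : EuclideanSpace ℝ (Fin d)) : 0 ≤ heatKernel d t x := by
  unfold heatKernel
  positivity

lemma integral_heatKernel (ht : 0 < t) : ∫ x, heatKernel d t x = 1 := by
  have gaussian (x : EuclideanSpace ℝ (Fin d)) : heatKernel d t x =
      (2 * Real.pi * t) ^ (-(d : ℝ) / 2) * Real.exp (-(2 * t)⁻¹ * ‖x‖ ^ 2) := by
    rw [heatKernel, neg_div (2 * t), div_eq_inv_mul (‖x‖ ^ 2), neg_mul]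
  simp only [gaussian]
  rw [integral_const_mul, GaussianFourier.integral_rexp_neg_mul_sq_norm (by positivity),
    finrank_euclideanSpace_fin, div_inv_eq_mul, mul_left_comm, ← mul_assoc,
    ← Real.rpow_add (by positivity), neg_div, neg_add_cancel, Real.rpow_zero]

lemma integrable_heatKernel (ht : 0 < t) : Integrable (heatKernel d t) :=
  .of_integral_ne_zero (by rw [integral_heatKernel ht]; exact one_ne_zero)

lemma integral_norm_heatKernel (ht : 0 < t) : ∫ x, ‖heatKernel d t x‖ = 1 := by
  simp only [Real.norm_of_nonneg (heatKernel_nonneg ht.le _), integral_heatKernel ht]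

end HeatKernel

section Box

variable (d : ℕ)

lemma smul_box {R : ℝ} (hR : 0 < R) (S : ℝ) : R • box d S = box d (R * S) := by
  ext x
  simp only [mem_smul_set_iff_inv_smul_mem₀ hR.ne', box, mem_ofPred_eq, PiLp.smul_apply,
    smul_eq_mul, abs_mul, abs_inv, abs_of_pos hR, inv_mul_le_iff₀ hR]

lemma isBounded_box (R : ℝ) : Bornology.IsBounded (box d R) := by
  refine ((PiLp.antilipschitzWith_ofLp 2 fun _ : Fin d ↦ ℝ).isBounded_preimage
    (isBounded_Icc (-fun _ ↦ R) fun _ ↦ R)).subset fun x hx ↦ ?_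
  exact ⟨fun i ↦ (abs_le.1 (hx i)).1, fun i ↦ (abs_le.1 (hx i)).2⟩

end Box

theorem stmt_5 (d : ℕ) (hd : 1 ≤ d) (β : ℝ) (hβ0 : 0 < β) (hβd : β < d) :
    ∃ C : ℝ, 0 < C ∧ ∀ t₁ t₂ : ℝ, 0 < t₁ → 0 < t₂ → ∀ R : ℝ, 0 < R →
      (∫ p in (box d R) ×ˢ (box d R),
          ∫ y : EuclideanSpace ℝ (Fin d), ∫ z : EuclideanSpace ℝ (Fin d),
            heatKernel d t₁ (p.1 - y) * heatKernel d t₂ (p.2 - z) * ‖y - z‖ ^ (-β)) ≤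
        C * R ^ (2 * (d : ℝ) - β) := by
  have finite : volume (box d 1) ≠ ∞ := (isBounded_box d 1).measure_lt_top.ne
  obtain ⟨C, hC, bound⟩ := stmt_5_general volume hβ0.le (by simpa using hβd) finite finite
  refine ⟨C, hC, fun t₁ t₂ ht₁ ht₂ R hR ↦ ?_⟩
  simpa only [smul_box d hR, mul_one, integral_norm_heatKernel ht₁, integral_norm_heatKernel ht₂,
    finrank_euclideanSpace_fin, ← Measure.volume_eq_prod] using
    bound _ _ (integrable_heatKernel ht₁) (integrable_heatKernel ht₂) R hR
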